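/- arXiv:2403.02851 — 2 statements merged into one kernel-verified Lean document; each statement's English description precedes it below -/
import Mathlib

section
/- Let P(q) = Σ_{k=0}^n qᵏ aₖ be a nonzero slice regular quaternionic polynomial. Then there exist constants C > 0 and δ > 0, depending only on P, such that for all ε > 0, μ({q ∈ T¹(ℍ) : |P(q)| ≤ ε}) ≤ C·ε^δ. -/
open MeasureTheory Quaternion

noncomputable instance : MeasurableSpace (Quaternion ℝ) := borel _
instance : BorelSpace (Quaternion ℝ) := ⟨rfl⟩
instance : Nonempty (Metric.sphere (0 : Quaternion ℝ) 1) := ⟨⟨1, by simp⟩⟩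

/-- The probability Haar measure `μ` on the group `T¹(ℍ)` of unit quaternions
(the Haar measure normalized so that the whole group has measure `1`). -/
noncomputable def muH : Measure (Metric.sphere (0 : Quaternion ℝ) 1) :=
  Measure.haarMeasure ⊤

/-- The quaternionic Mahler measure `m_ℍ(f) = ∫_{T¹(ℍ)} log |f(q)| dμ(q)`. -/
noncomputable def mahlerH (f : Quaternion ℝ → Quaternion ℝ) : ℝ :=
  ∫ q : Metric.sphere (0 : Quaternion ℝ) 1, Real.log ‖f q‖ ∂muH

/-!
Up to conjugation `∑ qᵏ aₖ` is the value at `q̄` of a polynomial over `ℍ` with a central variable.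
Its product with its regular conjugate is a nonzero real polynomial `r`, and `|r(q̄)|` is at most a
constant times `|P(q)|`. Inside the complex plane through `q̄`, `r` factors as a product of linear
forms, so `|P(q)|` dominates a constant times `∏ |Re q - Re α|` over the complex roots `α` of `r`.
It remains to bound the sublevel sets of `|Re q - t|`. By invariance of the Haar measure, their
measure is an average over left translates by a circle `exp (θ u)`; along an orbit `Re` is
`R cos (θ + φ)`, and a cosine is within `ε` of a given value only on a set of angles of measure
`O(√ε)`. The radius `R` is small only on a small set, by the same argument with another circle.
-/

open Polynomial
open Real (cos sin pi)

local notation "𝕊" => Metric.sphere (0 : Quaternion ℝ) 1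

/-- `F` is seldom small: the sublevel set `{F ≤ ε}` has measure at most a constant times a positive
power of `ε`. This property is stable under products and under averaging over translations. -/
def HasPowerSublevelBound {α : Type*} [MeasurableSpace α] (μ : Measure α) (F : α → ℝ) : Prop :=
  ∃ C > (0 : ℝ), ∃ δ > (0 : ℝ), ∀ ε > (0 : ℝ), μ.real {x | F x ≤ ε} ≤ C * ε ^ δ

namespace HasPowerSublevelBound

variable {α β : Type*} [MeasurableSpace α] [MeasurableSpace β] {μ : Measure α} {ν : Measure β}
  [IsFiniteMeasure μ] {F G : α → ℝ}

theorem of_le_one {C δ : ℝ} (hδ : 0 < δ)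
    (h : ∀ ε > (0 : ℝ), ε ≤ 1 → μ.real {x | F x ≤ ε} ≤ C * ε ^ δ) :
    HasPowerSublevelBound μ F := by
  refine ⟨max C (μ.real Set.univ + 1), by positivity, δ, hδ, fun ε hε => ?_⟩
  rcases le_total ε 1 with hε1 | hε1
  · exact (h ε hε hε1).trans (by gcongr; exact le_max_left _ _)
  · calc μ.real {x | F x ≤ ε} ≤ μ.real Set.univ + 1 :=
          (measureReal_mono (Set.subset_univ _)).trans (le_add_of_nonneg_right zero_le_one)
      _ ≤ max C (μ.real Set.univ + 1) * ε ^ δ :=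
          (le_max_right _ _).trans
            (le_mul_of_one_le_right (by positivity) (Real.one_le_rpow hε1 hδ.le))

theorem of_le_mul {c : ℝ} (hc : 0 < c) (hG : HasPowerSublevelBound μ G)
    (h : ∀ x, G x ≤ c * F x) : HasPowerSublevelBound μ F := by
  obtain ⟨C, hC, δ, hδ, hb⟩ := hG
  refine ⟨C * c ^ δ, by positivity, δ, hδ, fun ε hε => ?_⟩
  calc μ.real {x | F x ≤ ε} ≤ μ.real {x | G x ≤ c * ε} :=
        measureReal_mono fun x (hx : F x ≤ ε) => (h x).trans (by gcongr)
    _ ≤ C * (c * ε) ^ δ := hb _ (by positivity)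
    _ = C * c ^ δ * ε ^ δ := by rw [Real.mul_rpow hc.le hε.le, mul_assoc]

theorem of_le (hG : HasPowerSublevelBound μ G) (h : ∀ x, G x ≤ F x) :
    HasPowerSublevelBound μ F :=
  of_le_mul one_pos hG fun x => (h x).trans_eq (one_mul _).symm

theorem one : HasPowerSublevelBound μ fun _ => 1 := by
  refine of_le_one (C := μ.real Set.univ) one_pos fun ε _ hε1 => ?_
  rcases hε1.lt_or_eq with hlt | rfl
  · simp only [not_le.2 hlt, Set.ofPred_false, measureReal_empty]
    positivity
  · simp

theorem mul (hF : HasPowerSublevelBound μ F) (hG : HasPowerSublevelBound μ G) :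
    HasPowerSublevelBound μ fun x => F x * G x := by
  obtain ⟨C₁, hC₁, δ₁, hδ₁, h₁⟩ := hF
  obtain ⟨C₂, hC₂, δ₂, hδ₂, h₂⟩ := hG
  refine of_le_one (C := C₁ + C₂) (δ := min δ₁ δ₂ / 2) (by positivity) fun ε hε hε1 => ?_
  have hs : 0 < √ε := Real.sqrt_pos.2 hε
  have hs1 : √ε ≤ 1 := Real.sqrt_le_one.2 hε1
  have hsub : {x | F x * G x ≤ ε} ⊆ {x | F x ≤ √ε} ∪ {x | G x ≤ √ε} := by
    intro x (hx : F x * G x ≤ ε)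
    by_contra! hlarge
    obtain ⟨hFx, hGx⟩ : √ε < F x ∧ √ε < G x := by
      simpa only [Set.mem_union, Set.mem_ofPred_eq, not_or, not_le] using hlarge
    have := mul_lt_mul'' hFx hGx hs.le hs.le
    rw [Real.mul_self_sqrt hε.le] at this
    exact this.not_ge hx
  calc μ.real {x | F x * G x ≤ ε} ≤ μ.real {x | F x ≤ √ε} + μ.real {x | G x ≤ √ε} :=
        (measureReal_mono hsub).trans (measureReal_union_le _ _)
    _ ≤ C₁ * √ε ^ δ₁ + C₂ * √ε ^ δ₂ := add_le_add (h₁ _ hs) (h₂ _ hs)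
    _ ≤ C₁ * √ε ^ min δ₁ δ₂ + C₂ * √ε ^ min δ₁ δ₂ := by
        gcongr ?_ * ?_ + ?_ * ?_
        · exact Real.rpow_le_rpow_of_exponent_ge hs hs1 (min_le_left _ _)
        · exact Real.rpow_le_rpow_of_exponent_ge hs hs1 (min_le_right _ _)
    _ = (C₁ + C₂) * ε ^ (min δ₁ δ₂ / 2) := by
        rw [Real.sqrt_eq_rpow, ← Real.rpow_mul hε.le, one_div_mul_eq_div, add_mul]

theorem multiset_prod {ι : Type*} {f : ι → α → ℝ} (s : Multiset ι)
    (h : ∀ i ∈ s, HasPowerSublevelBound μ (f i)) :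
    HasPowerSublevelBound μ fun x => (s.map (f · x)).prod := by
  induction s using Multiset.induction_on with
  | empty => simpa only [Multiset.map_zero, Multiset.prod_zero] using one
  | cons i s ih =>
    simpa only [Multiset.map_cons, Multiset.prod_cons] using
      (h i (Multiset.mem_cons_self i s)).mul (ih fun j hj => h j (Multiset.mem_cons_of_mem hj))

theorem comp_snd [IsFiniteMeasure ν] (hF : HasPowerSublevelBound μ F) :
    HasPowerSublevelBound (ν.prod μ) fun x => F x.2 := by
  obtain ⟨C, -, δ, hδ, hb⟩ := hF
  refine of_le_one (C := ν.real Set.univ * C) hδ fun ε hε _ => ?_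
  calc (ν.prod μ).real {x | F x.2 ≤ ε} = ν.real Set.univ * μ.real {y | F y ≤ ε} := by
        rw [← measureReal_prod_prod, Set.univ_prod]; rfl
    _ ≤ ν.real Set.univ * C * ε ^ δ := by
        rw [mul_assoc]
        gcongr
        exact hb ε hε

theorem of_fibers [IsFiniteMeasure ν] {H : β × α → ℝ} (hH : Measurable H) {C δ : ℝ} (hC : 0 ≤ C)
    (hδ : 0 < δ) (h : ∀ ε > (0 : ℝ), ∀ y, ν.real {x | H (x, y) ≤ ε} ≤ C * ε ^ δ) :
    HasPowerSublevelBound (ν.prod μ) H := by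
  refine of_le_one (C := C * μ.real Set.univ) hδ fun ε hε _ => ?_
  have hint : (ν.prod μ) {x | H x ≤ ε} ≤ ENNReal.ofReal (C * ε ^ δ) * μ Set.univ := by
    rw [Measure.prod_apply_symm (measurableSet_le hH measurable_const), ← lintegral_const]
    gcongr with y
    rw [← ofReal_measureReal]
    exact ENNReal.ofReal_le_ofReal (h ε hε y)
  calc (ν.prod μ).real {x | H x ≤ ε} ≤ (ENNReal.ofReal (C * ε ^ δ) * μ Set.univ).toReal :=
        ENNReal.toReal_mono (ENNReal.mul_ne_top ENNReal.ofReal_ne_top (measure_ne_top _ _)) hint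
    _ = C * μ.real Set.univ * ε ^ δ := by
        rw [ENNReal.toReal_mul, ENNReal.toReal_ofReal (by positivity), ← measureReal_def,
          mul_right_comm]

theorem of_average {G : Type*} [Group G] [MeasurableSpace G] [MeasurableMul₂ G] {μ : Measure G}
    [IsFiniteMeasure μ] [μ.IsMulLeftInvariant] [IsFiniteMeasure ν] [NeZero ν] {F : G → ℝ}
    (hF : Measurable F) {g : β → G} (hg : Measurable g)
    (h : HasPowerSublevelBound (ν.prod μ) fun x => F (g x.1 * x.2)) :
    HasPowerSublevelBound μ F := by
  obtain ⟨C, -, δ, hδ, hb⟩ := h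
  have hν : 0 < ν.real Set.univ := by simp [measureReal_def, ENNReal.toReal_pos_iff, NeZero.ne]
  refine of_le_one (C := C / ν.real Set.univ) hδ fun ε hε _ => ?_
  have hpres : MeasurePreserving (fun x : β × G => (x.1, g x.1 * x.2)) (ν.prod μ) (ν.prod μ) :=
    (MeasurePreserving.id ν).skew_product (g := fun t q => g t * q) (by fun_prop)
      (.of_forall fun t => map_mul_left_eq_self μ (g t))
  have hS : MeasurableSet {q | F q ≤ ε} := measurableSet_le hF measurable_const
  rw [div_mul_eq_mul_div, le_div_iff₀ hν]
  calc μ.real {q | F q ≤ ε} * ν.real Set.univ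
      = (ν.prod μ).real (Set.univ ×ˢ {q | F q ≤ ε}) := by rw [measureReal_prod_prod, mul_comm]
    _ = (ν.prod μ).real {x | F (g x.1 * x.2) ≤ ε} := by
        rw [← hpres.measureReal_preimage (MeasurableSet.univ.prod hS).nullMeasurableSet,
          Set.univ_prod]; rfl
    _ ≤ C * ε ^ δ := hb ε hε

end HasPowerSublevelBound

theorem sq_sub_le_mul_abs_cos_sub_cos {x y : ℝ} (hx : x ∈ Set.Icc 0 pi) (hy : y ∈ Set.Icc 0 pi) :
    (x - y) ^ 2 ≤ pi ^ 2 / 2 * |cos x - cos y| := by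
  wlog hyx : y ≤ x generalizing x y
  · rw [abs_sub_comm, ← neg_sub, neg_sq]
    exact this hy hx (le_of_not_ge hyx)
  have hhalf : cos y - cos x - (1 - cos (x - y)) =
      4 * (sin ((x - y) / 2) * sin (y / 2) * cos (x / 2)) := by
    obtain ⟨a, rfl⟩ : ∃ a, x = 2 * a := ⟨x / 2, by ring⟩
    obtain ⟨b, rfl⟩ : ∃ b, y = 2 * b := ⟨y / 2, by ring⟩
    rw [← mul_sub]
    simp only [mul_div_cancel_left₀ _ (two_ne_zero' ℝ), Real.cos_two_mul, Real.cos_sub,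
      Real.sin_sub]
    linear_combination 2 * sin b ^ 2 * Real.sin_sq_add_cos_sq a +
      (2 + 2 * cos a ^ 2) * Real.sin_sq_add_cos_sq b
  have hnonneg : 0 ≤ sin ((x - y) / 2) * sin (y / 2) * cos (x / 2) :=
    mul_nonneg
      (mul_nonneg
        (Real.sin_nonneg_of_nonneg_of_le_pi (by linarith) (by linarith [hx.2, hy.1]))
        (Real.sin_nonneg_of_nonneg_of_le_pi (by linarith [hy.1]) (by linarith [hy.2, hy.1])))
      (Real.cos_nonneg_of_neg_pi_div_two_le_of_le (by linarith [hx.1, Real.pi_pos])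
        (by linarith [hx.2]))
  have hcos : cos (x - y) ≤ 1 - 2 / pi ^ 2 * (x - y) ^ 2 :=
    Real.cos_le_one_sub_mul_cos_sq (abs_le.2 ⟨by linarith [Real.pi_pos], by linarith [hx.2, hy.1]⟩)
  calc (x - y) ^ 2 = pi ^ 2 / 2 * (2 / pi ^ 2 * (x - y) ^ 2) := by
        field_simp
    _ ≤ pi ^ 2 / 2 * (cos y - cos x) := by gcongr; linarith
    _ ≤ pi ^ 2 / 2 * |cos x - cos y| := by rw [abs_sub_comm]; gcongr; exact le_abs_self _

theorem volume_abs_cos_sub_le (k : ℤ) (t : ℝ) {ε : ℝ} (hε : 0 ≤ ε) :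
    volume {x | x ∈ Set.Icc (k * pi) ((k + 1) * pi) ∧ |cos x - t| ≤ ε} ≤
      ENNReal.ofReal (pi * √ε) := by
  refine (Real.volume_le_diam _).trans (Metric.ediam_le fun x hx y hy => ?_)
  rw [edist_dist, Real.dist_eq]
  refine ENNReal.ofReal_le_ofReal (abs_le_of_sq_le_sq ?_ (by positivity))
  have hshift : ∀ z ∈ Set.Icc (k * pi) ((k + 1) * pi), z - k * pi ∈ Set.Icc 0 pi := fun z hz =>
    ⟨by linarith [hz.1], by linarith [hz.2]⟩
  calc (x - y) ^ 2 = ((x - k * pi) - (y - k * pi)) ^ 2 := by ring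
    _ ≤ pi ^ 2 / 2 * |cos (x - k * pi) - cos (y - k * pi)| :=
        sq_sub_le_mul_abs_cos_sub_cos (hshift x hx.1) (hshift y hy.1)
    _ = pi ^ 2 / 2 * |cos x - cos y| := by
        rw [Real.cos_sub_int_mul_pi, Real.cos_sub_int_mul_pi, ← mul_sub, abs_mul,
          abs_neg_one_zpow, one_mul]
    _ ≤ pi ^ 2 / 2 * (ε + ε) := by
        gcongr
        calc |cos x - cos y| ≤ |cos x - t| + |t - cos y| := abs_sub_le _ _ _
          _ ≤ ε + ε := add_le_add hx.2 (by rw [abs_sub_comm]; exact hy.2)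
    _ = (pi * √ε) ^ 2 := by rw [mul_pow, Real.sq_sqrt hε]; ring

theorem volume_real_abs_cos_add_sub_le (φ t : ℝ) {ε : ℝ} (hε : 0 ≤ ε) :
    (volume.restrict (Set.Icc 0 pi)).real {θ | |cos (θ + φ) - t| ≤ ε} ≤ 2 * pi * √ε := by
  let S (k : ℤ) : Set ℝ := {x | x ∈ Set.Icc (k * pi) ((k + 1) * pi) ∧ |cos x - t| ≤ ε}
  set k := ⌊φ / pi⌋
  have hk : k * pi ≤ φ := (le_div_iff₀ Real.pi_pos).1 (Int.floor_le _)
  have hk' : φ ≤ (k + 1) * pi := ((div_lt_iff₀ Real.pi_pos).1 (Int.lt_floor_add_one _)).le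
  have hcover : {θ | |cos (θ + φ) - t| ≤ ε} ∩ Set.Icc 0 pi ⊆ (· + φ) ⁻¹' (S k ∪ S (k + 1)) := by
    rintro θ ⟨hθ, h0, hpi⟩
    rcases le_total (θ + φ) ((k + 1) * pi) with hle | hle
    · exact .inl ⟨⟨by linarith, hle⟩, hθ⟩
    · exact .inr ⟨⟨by push_cast; exact hle, by push_cast; linarith⟩, hθ⟩
  have hS : volume (S k ∪ S (k + 1)) ≤ ENNReal.ofReal (2 * pi * √ε) :=
    calc volume (S k ∪ S (k + 1)) ≤ volume (S k) + volume (S (k + 1)) := measure_union_le _ _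
      _ ≤ ENNReal.ofReal (pi * √ε) + ENNReal.ofReal (pi * √ε) :=
          add_le_add (volume_abs_cos_sub_le k t hε) (volume_abs_cos_sub_le (k + 1) t hε)
      _ = ENNReal.ofReal (2 * pi * √ε) := by
          rw [← ENNReal.ofReal_add (by positivity) (by positivity)]; ring_nf
  refine ENNReal.toReal_le_of_le_ofReal (by positivity) ?_
  rw [Measure.restrict_apply' measurableSet_Icc]
  calc volume ({θ | |cos (θ + φ) - t| ≤ ε} ∩ Set.Icc 0 pi)
      ≤ volume ((· + φ) ⁻¹' (S k ∪ S (k + 1))) := measure_mono hcover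
    _ = volume (S k ∪ S (k + 1)) := measure_preimage_add_right volume φ _
    _ ≤ ENNReal.ofReal (2 * pi * √ε) := hS

theorem hasPowerSublevelBound_abs_cos_add_sub {α : Type*} [MeasurableSpace α] (μ : Measure α)
    [IsFiniteMeasure μ] {φ t : α → ℝ} (hφ : Measurable φ) (ht : Measurable t) :
    HasPowerSublevelBound ((volume.restrict (Set.Icc 0 pi)).prod μ)
      fun x => |cos (x.1 + φ x.2) - t x.2| := by
  refine .of_fibers (by fun_prop) (C := 2 * pi) (by positivity) one_half_pos fun ε hε y => ?_
  rw [← Real.sqrt_eq_rpow]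
  exact volume_real_abs_cos_add_sub_le (φ y) (t y) hε.le

section Slices

theorem norm_eq_one_of_mul_self_eq_neg_one {A : Type*} [NormedDivisionRing A] {u : A}
    (hu : u * u = -1) : ‖u‖ = 1 := by
  have : ‖u‖ * ‖u‖ = 1 := by rw [← norm_mul, hu, norm_neg, norm_one]
  nlinarith [norm_nonneg u]

theorem re_eq_zero_of_mul_self_eq_neg_one {u : ℍ} (hu : u * u = -1) : u.re = 0 := by
  refine Quaternion.sq_eq_neg_normSq.1 ?_
  rw [sq, hu, Quaternion.normSq_eq_norm_mul_self, norm_eq_one_of_mul_self_eq_neg_one hu, mul_one,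
    Quaternion.coe_one]

theorem algHom_I_mul_self {A : Type*} [Ring A] [Algebra ℝ A] (f : ℂ →ₐ[ℝ] A) :
    f Complex.I * f Complex.I = -1 := by
  rw [← map_mul, Complex.I_mul_I, map_neg, map_one]

theorem algHom_apply (f : ℂ →ₐ[ℝ] ℍ) (z : ℂ) : f z = z.re + z.im • f Complex.I := by
  conv_lhs => rw [← Complex.re_add_im z, map_add, map_mul]
  rw [← Complex.coe_algebraMap, AlgHom.commutes, AlgHom.commutes, ← Algebra.smul_def,
    Quaternion.algebraMap_def]

theorem re_algHom_apply (f : ℂ →ₐ[ℝ] ℍ) (z : ℂ) : (f z).re = z.re := by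
  simp [algHom_apply f z, re_eq_zero_of_mul_self_eq_neg_one (algHom_I_mul_self f)]

theorem norm_algHom_apply (f : ℂ →ₐ[ℝ] ℍ) (z : ℂ) : ‖f z‖ = ‖z‖ := by
  have hre := re_eq_zero_of_mul_self_eq_neg_one (algHom_I_mul_self f)
  have hnorm := norm_eq_one_of_mul_self_eq_neg_one (algHom_I_mul_self f)
  have hinner : (z.re * star (z.im • f Complex.I) : ℍ).re = 0 := by simp [hre]
  rw [← sq_eq_sq₀ (norm_nonneg _) (norm_nonneg _), Complex.sq_norm, Complex.normSq_apply, sq,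
    ← Quaternion.normSq_eq_norm_mul_self, algHom_apply, Quaternion.normSq_add, hinner,
    Quaternion.normSq_coe, Quaternion.normSq_smul, Quaternion.normSq_eq_norm_mul_self, hnorm]
  ring

theorem exists_algHom_apply_eq (q : ℍ) : ∃ (f : ℂ →ₐ[ℝ] ℍ) (z : ℂ), f z = q := by
  by_cases him : q.im = 0
  · refine ⟨ofComplex, q.re, ?_⟩
    rw [coe_ofComplex, Quaternion.coeComplex_coe]
    conv_rhs => rw [← Quaternion.re_add_im q, him, add_zero]
  · have hn : ‖q.im‖ ≠ 0 := norm_ne_zero_iff.2 him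
    have hu : (‖q.im‖⁻¹ • q.im) * (‖q.im‖⁻¹ • q.im) = -1 := by
      have him_sq : q.im * q.im = -((‖q.im‖ * ‖q.im‖ : ℝ) : ℍ) := by
        rw [← sq, Quaternion.sq_eq_neg_normSq.2 (Quaternion.re_im q),
          Quaternion.normSq_eq_norm_mul_self]
      have hone : ‖q.im‖⁻¹ * ‖q.im‖⁻¹ * (‖q.im‖ * ‖q.im‖) = 1 := by field_simp
      rw [smul_mul_smul_comm, him_sq, smul_neg, Quaternion.smul_coe, hone, Quaternion.coe_one]
    refine ⟨Complex.liftAux _ hu, ⟨q.re, ‖q.im‖⟩, ?_⟩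
    rw [Complex.liftAux_apply, smul_smul, mul_inv_cancel₀ hn, one_smul]
    exact Quaternion.re_add_im q

theorem prod_abs_re_sub_le_norm_aeval (r : ℝ[X]) (q : ℍ) :
    ‖r.leadingCoeff‖ * ((r.aroots ℂ).map (|q.re - ·.re|)).prod ≤ ‖aeval q r‖ := by
  obtain ⟨f, z, rfl⟩ := exists_algHom_apply_eq q
  have hfactor : ‖aeval z r‖ = ‖r.leadingCoeff‖ * ((r.aroots ℂ).map (‖z - ·‖)).prod := by
    rw [(IsAlgClosed.splits _).aeval_eq_prod_aroots, norm_mul, norm_algebraMap']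
    congr 1
    exact (map_multiset_prod (normHom (α := ℂ)) _).trans (by rw [Multiset.map_map]; rfl)
  rw [aeval_algHom_apply, norm_algHom_apply, hfactor]
  gcongr
  refine Multiset.prod_map_le_prod_map₀ _ _ (fun _ _ => abs_nonneg _) fun α _ => ?_
  simpa only [re_algHom_apply, Complex.sub_re] using Complex.abs_re_le_norm (z - α)

end Slices

section RegularConjugate

variable {R : Type*} [Semiring R] [StarRing R]

/-- The regular conjugate of a polynomial with a central variable: the coefficients are starred and
the variable is kept. Its product with `p` is the symmetrization of `p`. -/
noncomputable def regularConj (p : R[X]) : R[X] :=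
  ∑ k ∈ p.support, monomial k (star (p.coeff k))

theorem coeff_regularConj (p : R[X]) (k : ℕ) : (regularConj p).coeff k = star (p.coeff k) := by
  simp only [regularConj, finsetSum_coeff, coeff_monomial, Finset.sum_ite_eq', mem_support_iff,
    ite_eq_left_iff, not_not]
  intro hk
  rw [hk, star_zero]

theorem regularConj_ne_zero {p : R[X]} (hp : p ≠ 0) : regularConj p ≠ 0 := by
  contrapose! hp
  ext k
  rw [coeff_zero, ← star_eq_zero, ← coeff_regularConj, hp, coeff_zero]

theorem star_coeff_regularConj_mul_self (p : R[X]) (m : ℕ) :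
    star ((regularConj p * p).coeff m) = (regularConj p * p).coeff m := by
  rw [coeff_mul, star_sum, ← Finset.Nat.sum_antidiagonal_swap]
  refine Finset.sum_congr rfl fun k _ => ?_
  rw [star_mul, coeff_regularConj, coeff_regularConj, star_star]
  rfl

theorem exists_map_eq_regularConj_mul_self (p : (Quaternion ℝ)[X]) :
    ∃ r : ℝ[X], r.map (algebraMap ℝ ℍ) = regularConj p * p := by
  rw [← mem_lifts, lifts_iff_coeff_lifts]
  exact fun m => ⟨_, (Quaternion.star_eq_self.1 (star_coeff_regularConj_mul_self p m)).symm⟩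

end RegularConjugate

theorem norm_eval_mul_le {A : Type*} [NormedRing A] [NormOneClass A] (f p : A[X]) {x : A}
    (hx : ‖x‖ ≤ 1) : ‖(f * p).eval x‖ ≤ (∑ k ∈ f.support, ‖f.coeff k‖) * ‖p.eval x‖ := by
  have heval : (f * p).eval x = ∑ k ∈ f.support, f.coeff k * p.eval x * x ^ k := by
    conv_lhs => rw [f.as_sum_support_C_mul_X_pow, Finset.sum_mul, eval_finsetSum]
    refine Finset.sum_congr rfl fun k _ => ?_
    rw [mul_assoc, (commute_X_pow p k).eq, ← mul_assoc, eval_mul_X_pow, eval_C_mul]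
  rw [heval, Finset.sum_mul]
  refine norm_sum_le_of_le _ fun k _ => ?_
  calc ‖f.coeff k * p.eval x * x ^ k‖ ≤ ‖f.coeff k‖ * ‖p.eval x‖ * ‖x‖ ^ k :=
        (norm_mul_le _ _).trans (mul_le_mul (norm_mul_le _ _) (norm_pow_le _ _)
          (norm_nonneg _) (by positivity))
    _ ≤ ‖f.coeff k‖ * ‖p.eval x‖ :=
        mul_le_of_le_one_right (by positivity) (pow_le_one₀ (norm_nonneg _) hx)

theorem exists_prod_abs_re_sub_le_norm_eval {p : (Quaternion ℝ)[X]} (hp : p ≠ 0) :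
    ∃ c > 0, ∃ s : Multiset ℝ, ∀ q : ℍ, ‖q‖ ≤ 1 →
      (s.map (|q.re - ·|)).prod ≤ c * ‖p.eval q‖ := by
  obtain ⟨r, hr⟩ := exists_map_eq_regularConj_mul_self p
  have hr0 : r ≠ 0 := by
    rintro rfl
    rw [Polynomial.map_zero] at hr
    exact mul_ne_zero (regularConj_ne_zero hp) hp hr.symm
  have hlc : 0 < ‖r.leadingCoeff‖ := norm_pos_iff.2 (leadingCoeff_ne_zero.2 hr0)
  set M := ∑ k ∈ (regularConj p).support, ‖(regularConj p).coeff k‖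
  refine ⟨(M + 1) / ‖r.leadingCoeff‖, by positivity, (r.aroots ℂ).map Complex.re,
    fun q hq => ?_⟩
  rw [Multiset.map_map, div_mul_eq_mul_div, le_div_iff₀' hlc]
  calc ‖r.leadingCoeff‖ * ((r.aroots ℂ).map (|q.re - ·.re|)).prod
      ≤ ‖aeval q r‖ := prod_abs_re_sub_le_norm_aeval r q
    _ = ‖(regularConj p * p).eval q‖ := by rw [← hr, eval_map_algebraMap]
    _ ≤ M * ‖p.eval q‖ := norm_eval_mul_le _ _ hq
    _ ≤ (M + 1) * ‖p.eval q‖ := by gcongr; exact le_add_of_nonneg_right zero_le_one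

theorem exists_prod_abs_re_sub_le_norm_sum {n : ℕ} {a : Fin n → ℍ} (ha : a ≠ 0) :
    ∃ c > 0, ∃ s : Multiset ℝ, ∀ q : ℍ, ‖q‖ ≤ 1 →
      (s.map (|q.re - ·|)).prod ≤ c * ‖∑ k : Fin n, q ^ (k : ℕ) * a k‖ := by
  let p : (Quaternion ℝ)[X] := ∑ k : Fin n, C (star (a k)) * X ^ (k : ℕ)
  have hcoeff (k : Fin n) : p.coeff k = star (a k) := by
    simp only [p, finsetSum_coeff, coeff_C_mul_X_pow, Fin.val_inj, Finset.sum_ite_eq,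
      Finset.mem_univ, if_true]
  have hp : p ≠ 0 := by
    contrapose! ha
    ext1 k
    rw [Pi.zero_apply, ← star_eq_zero, ← hcoeff, ha, coeff_zero]
  obtain ⟨c, hc, s, h⟩ := exists_prod_abs_re_sub_le_norm_eval hp
  refine ⟨c, hc, s, fun q hq => ?_⟩
  have heval : p.eval (star q) = star (∑ k : Fin n, q ^ (k : ℕ) * a k) := by
    simp only [p, eval_finsetSum, eval_C_mul, eval_X_pow, star_sum, star_mul, star_pow]
  simpa only [heval, Quaternion.norm_star, Quaternion.re_star] using
    h (star q) (by rwa [Quaternion.norm_star])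

section Rotors

/-- The one-parameter group `θ ↦ exp (θ u)` of unit quaternions attached to the embedding `f` of
`ℂ`, where `u = f I`. -/
noncomputable def rotor (f : ℂ →ₐ[ℝ] ℍ) (θ : ℝ) : 𝕊 :=
  ⟨f (Complex.exp (θ * Complex.I)), by
    rw [mem_sphere_zero_iff_norm, norm_algHom_apply, Complex.norm_exp_ofReal_mul_I]⟩

theorem coe_rotor (f : ℂ →ₐ[ℝ] ℍ) (θ : ℝ) :
    (rotor f θ : ℍ) = (cos θ : ℍ) + sin θ • f Complex.I := by
  refine (algHom_apply f _).trans ?_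
  rw [Complex.exp_ofReal_mul_I_re, Complex.exp_ofReal_mul_I_im]

theorem measurable_rotor (f : ℂ →ₐ[ℝ] ℍ) : Measurable (rotor f) := by
  have hf : Continuous f := f.toLinearMap.continuous_of_finiteDimensional
  refine Continuous.measurable ?_
  unfold rotor
  fun_prop

/-- The imaginary unit `j`. -/
def unitJ : ℍ := ⟨0, 0, 1, 0⟩

@[simp] theorem re_unitJ : unitJ.re = 0 := rfl
@[simp] theorem imI_unitJ : unitJ.imI = 0 := rfl
@[simp] theorem imJ_unitJ : unitJ.imJ = 1 := rfl
@[simp] theorem imK_unitJ : unitJ.imK = 0 := rfl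

/-- The embedding of `ℂ` with `I ↦ j`, the analogue of `Quaternion.ofComplex` for `j`. -/
noncomputable def ofComplexJ : ℂ →ₐ[ℝ] ℍ := Complex.liftAux unitJ (by ext <;> simp)

theorem coe_rotor_ofComplexJ (θ : ℝ) : (rotor ofComplexJ θ : ℍ) = cos θ + sin θ • unitJ := by
  rw [coe_rotor, ofComplexJ, Complex.liftAux_apply_I]

theorem re_rotor_ofComplexJ_mul (θ : ℝ) (q : 𝕊) :
    (rotor ofComplexJ θ * q).1.re = cos θ * q.1.re - sin θ * q.1.imJ := by
  simp [coe_rotor_ofComplexJ]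

theorem imI_rotor_ofComplexJ_mul (θ : ℝ) (q : 𝕊) :
    (rotor ofComplexJ θ * q).1.imI = cos θ * q.1.imI + sin θ * q.1.imK := by
  simp [coe_rotor_ofComplexJ]

theorem re_rotor_ofComplex_mul (θ : ℝ) (q : 𝕊) :
    (rotor ofComplex θ * q).1.re = cos θ * q.1.re - sin θ * q.1.imI := by
  simp [coe_rotor]

end Rotors

theorem norm_mul_cos_add_arg (θ : ℝ) (z : ℂ) :
    ‖z‖ * cos (θ + z.arg) = cos θ * z.re - sin θ * z.im := by
  rw [Real.cos_add, mul_sub, mul_left_comm, mul_left_comm ‖z‖, Complex.norm_mul_cos_arg,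
    Complex.norm_mul_sin_arg]

theorem abs_cos_mul_abs_cos_le_norm {z w : ℂ} (h : ‖z‖ ^ 2 + ‖w‖ ^ 2 = 1) (θ : ℝ) :
    |cos (θ + z.arg)| * |cos (θ + w.arg)| ≤
      ‖(⟨cos θ * z.re - sin θ * z.im, cos θ * w.re - sin θ * w.im⟩ : ℂ)‖ := by
  rw [← norm_mul_cos_add_arg, ← norm_mul_cos_add_arg]
  set a := cos (θ + z.arg)
  set b := cos (θ + w.arg)
  have ha : a ^ 2 ≤ 1 := Real.cos_sq_le_one _
  have hb : b ^ 2 ≤ 1 := Real.cos_sq_le_one _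
  rw [← abs_mul]
  refine abs_le_of_sq_le_sq ?_ (norm_nonneg _)
  calc (a * b) ^ 2 = ‖z‖ ^ 2 * (a ^ 2 * b ^ 2) + ‖w‖ ^ 2 * (a ^ 2 * b ^ 2) := by
        rw [← add_mul, h, one_mul, mul_pow]
    _ ≤ ‖z‖ ^ 2 * a ^ 2 + ‖w‖ ^ 2 * b ^ 2 := by
        gcongr
        · exact mul_le_of_le_one_right (sq_nonneg _) hb
        · exact mul_le_of_le_one_left (sq_nonneg _) ha
    _ = ‖(⟨‖z‖ * a, ‖w‖ * b⟩ : ℂ)‖ ^ 2 := by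
        rw [Complex.sq_norm ⟨‖z‖ * a, ‖w‖ * b⟩, Complex.normSq_mk]
        ring

section UnitQuaternions

@[fun_prop]
theorem measurable_complex_mk {α : Type*} [MeasurableSpace α] {f g : α → ℝ} (hf : Measurable f)
    (hg : Measurable g) : Measurable fun x => (⟨f x, g x⟩ : ℂ) :=
  Complex.measurableEquivRealProd.symm.measurable.comp (hf.prodMk hg)

@[fun_prop]
theorem measurable_re : Measurable fun q : ℍ => q.re := Quaternion.continuous_re.measurable

@[fun_prop]
theorem measurable_imI : Measurable fun q : ℍ => q.imI := Quaternion.continuous_imI.measurable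

@[fun_prop]
theorem measurable_imJ : Measurable fun q : ℍ => q.imJ := Quaternion.continuous_imJ.measurable

@[fun_prop]
theorem measurable_imK : Measurable fun q : ℍ => q.imK := Quaternion.continuous_imK.measurable

instance : IsProbabilityMeasure muH :=
  ⟨by rw [muH, ← TopologicalSpace.PositiveCompacts.coe_top]; exact Measure.haarMeasure_self⟩

instance : muH.IsMulLeftInvariant := inferInstanceAs (Measure.haarMeasure ⊤).IsMulLeftInvariant

instance : NeZero (volume.restrict (Set.Icc 0 pi)) :=
  ⟨by simp [Real.pi_pos.not_ge]⟩

theorem sum_sq_eq_one (q : 𝕊) : q.1.re ^ 2 + q.1.imI ^ 2 + q.1.imJ ^ 2 + q.1.imK ^ 2 = 1 := by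
  rw [← Quaternion.normSq_def', Quaternion.normSq_eq_norm_mul_self, norm_eq_of_mem_sphere,
    mul_one]

theorem hasPowerSublevelBound_norm_re_imI :
    HasPowerSublevelBound muH fun q => ‖(⟨q.1.re, q.1.imI⟩ : ℂ)‖ := by
  refine .of_average (ν := volume.restrict (Set.Icc 0 pi)) (by fun_prop)
    (measurable_rotor ofComplexJ) ?_
  let z (q : 𝕊) : ℂ := ⟨q.1.re, q.1.imJ⟩
  let w (q : 𝕊) : ℂ := ⟨q.1.imI, -q.1.imK⟩
  have hz : Measurable fun q => (z q).arg := by fun_prop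
  have hw : Measurable fun q => (w q).arg := by fun_prop
  refine ((hasPowerSublevelBound_abs_cos_add_sub muH hz measurable_zero).mul
    (hasPowerSublevelBound_abs_cos_add_sub muH hw measurable_zero)).of_le fun ⟨θ, q⟩ => ?_
  have hzw : ‖z q‖ ^ 2 + ‖w q‖ ^ 2 = 1 := by
    rw [Complex.sq_norm, Complex.sq_norm, Complex.normSq_mk, Complex.normSq_mk]
    linear_combination sum_sq_eq_one q
  have := abs_cos_mul_abs_cos_le_norm hzw θ
  simpa only [Pi.zero_apply, sub_zero, re_rotor_ofComplexJ_mul, imI_rotor_ofComplexJ_mul, w, z,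
    mul_neg, sub_neg_eq_add] using this

theorem hasPowerSublevelBound_abs_re_sub (t : ℝ) :
    HasPowerSublevelBound muH fun q => |q.1.re - t| := by
  refine .of_average (ν := volume.restrict (Set.Icc 0 pi)) (by fun_prop)
    (measurable_rotor ofComplex) ?_
  let w (q : 𝕊) : ℂ := ⟨q.1.re, q.1.imI⟩
  have hw : Measurable w := by fun_prop
  refine (hasPowerSublevelBound_norm_re_imI.comp_snd.mul
    (hasPowerSublevelBound_abs_cos_add_sub muH (φ := fun q => (w q).arg)
      (t := fun q => t / ‖w q‖) (by fun_prop) (by fun_prop))).of_le fun ⟨θ, q⟩ => ?_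
  -- At `w q = 0`, where `t / ‖w q‖` takes the junk value `0`, the left-hand side vanishes.
  calc ‖w q‖ * |cos (θ + (w q).arg) - t / ‖w q‖| ≤ |‖w q‖ * cos (θ + (w q).arg) - t| := by
        rcases eq_or_ne ‖w q‖ 0 with h0 | h0
        · rw [h0, zero_mul]
          exact abs_nonneg _
        · rw [← abs_norm, ← abs_mul, abs_norm, mul_sub, mul_div_cancel₀ _ h0]
    _ = |(rotor ofComplex θ * q).1.re - t| := by
        rw [norm_mul_cos_add_arg, re_rotor_ofComplex_mul]

end UnitQuaternions

/-- polynomial measure bound for small values of a slice regular polynomial. -/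
theorem measure_small_values_slice_regular (n : ℕ) (a : Fin (n + 1) → Quaternion ℝ)
    (ha : a ≠ 0) :
    ∃ C > (0 : ℝ), ∃ δ > (0 : ℝ), ∀ ε > (0 : ℝ),
      muH {q : Metric.sphere (0 : Quaternion ℝ) 1 |
          ‖∑ k : Fin (n + 1), (q : Quaternion ℝ) ^ (k : ℕ) * a k‖ ≤ ε} ≤
        ENNReal.ofReal (C * ε ^ δ) := by
  obtain ⟨c, hc, s, hs⟩ := exists_prod_abs_re_sub_le_norm_sum ha
  obtain ⟨C, hC, δ, hδ, h⟩ :=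
    (HasPowerSublevelBound.multiset_prod s fun t _ => hasPowerSublevelBound_abs_re_sub t).of_le_mul
      hc fun q => hs q (norm_eq_of_mem_sphere q).le
  refine ⟨C, hC, δ, hδ, fun ε hε => ?_⟩
  rw [ENNReal.le_ofReal_iff_toReal_le (measure_ne_top _ _) (by positivity)]
  exact h ε hε
end

section
/- With i, j, k the standard imaginary units of ℍ, the quaternionic Mahler measure of the ∗-product (q − i) ∗ (q − j), i.e. of the slice regular polynomial q ↦ q² − q(i + j) + k, equals π/2 − 1. -/
open MeasureTheory Quaternion

/-- The standard imaginary unit `i` of the quaternions. -/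
noncomputable def qI : Quaternion ℝ := ⟨0, 1, 0, 0⟩
/-- The standard imaginary unit `j` of the quaternions. -/
noncomputable def qJ : Quaternion ℝ := ⟨0, 0, 1, 0⟩
/-- The standard imaginary unit `k` of the quaternions. -/
noncomputable def qK : Quaternion ℝ := ⟨0, 0, 0, 1⟩

/-!
For `q = a + b i + c j + d k` on the unit sphere, `|(q - i) ∗ (q - j)|² = 4 (1 + X)` with
`X = -b + a d`. Conjugations preserve Haar measure and `a`, and rotate `(b, c, d)`; on each
conjugacy class the linear form `-b + a d` therefore has the same law as `√(1 + a²) b`. By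
Archimedes' theorem `(a, b)` is uniform on the unit disc, so `X` has the law of `Y = √(1 + a²) b`
there. As `Y` is symmetric, `2 E log (1 + Y) = E log (1 - Y²)`. On the circle of radius `√(1 - η²)`
the function `1 - Y²` is the squared modulus of a polynomial without zeros in the closed unit disc,
so Jensen's formula gives its mean logarithm in closed form, and an elementary integral over `η²`
remains.
-/

open Set Metric ProbabilityTheory
open scoped ENNReal Real

/-! ### Averaging over conjugacy classes -/

section Group

variable {G β : Type*} [Group G] [MeasurableSpace G] [MeasurableMul₂ G] [MeasurableInv G]
  [MeasurableSpace β] (μ : Measure G) [IsProbabilityMeasure μ] [μ.IsMulLeftInvariant]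
  [μ.IsMulRightInvariant]

theorem lintegral_eq_lintegral_lintegral_conj {F : G → ℝ≥0∞} (hF : Measurable F) :
    ∫⁻ q, F q ∂μ = ∫⁻ q, ∫⁻ p, F (p * q * p⁻¹) ∂μ ∂μ := by
  have hm : Measurable fun x : G × G => F (x.2 * x.1 * x.2⁻¹) := hF.comp (by fun_prop)
  have hconj (p : G) : ∫⁻ q, F (p * q * p⁻¹) ∂μ = ∫⁻ q, F q ∂μ := by
    rw [lintegral_mul_left_eq_self (fun q => F (q * p⁻¹)), lintegral_mul_right_eq_self]
  rw [lintegral_lintegral_swap (f := fun q p => F (p * q * p⁻¹)) hm.aemeasurable]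
  simp [hconj]

/- On each conjugacy class `X` and `Y` agree up to a conjugation, so their averages over that class
agree by left invariance. -/
theorem identDistrib_of_forall_exists_conj {X Y : G → β} (hX : Measurable X) (hY : Measurable Y)
    (h : ∀ q, ∃ g, ∀ p, X (g * (p * q * p⁻¹) * g⁻¹) = Y (p * q * p⁻¹)) :
    IdentDistrib X Y μ μ := by
  refine ⟨hX.aemeasurable, hY.aemeasurable, Measure.ext_of_lintegral _ fun F hF => ?_⟩
  rw [lintegral_map hF hX, lintegral_map hF hY,
    lintegral_eq_lintegral_lintegral_conj μ (F := fun q => F (X q)) (hF.comp hX),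
    lintegral_eq_lintegral_lintegral_conj μ (F := fun q => F (Y q)) (hF.comp hY)]
  refine lintegral_congr fun q => ?_
  obtain ⟨g, hg⟩ := h q
  rw [← lintegral_mul_left_eq_self _ g]
  refine lintegral_congr fun p => ?_
  rw [← hg p]
  group

end Group

/-! ### Polar coordinates in the plane -/

theorem lintegral_eq_lintegral_circleMap_sqrt {f : ℂ → ℝ≥0∞} (hf : Measurable f) (c : ℂ) :
    ∫⁻ z, f z =
      ∫⁻ t in Ioi (0 : ℝ), 2⁻¹ * ∫⁻ α in Ioo (-π) π, f (circleMap c √t α) := by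
  have himage : (fun r : ℝ => r ^ 2) '' Ioi 0 = Ioi 0 := by
    ext t
    refine ⟨?_, fun ht => ⟨√t, Real.sqrt_pos.2 ht, Real.sq_sqrt (le_of_lt ht)⟩⟩
    rintro ⟨r, hr, rfl⟩
    exact pow_pos (mem_Ioi.1 hr) 2
  have hmono : MonotoneOn (fun r : ℝ => r ^ 2) (Ioi 0) := fun r hr s _ hrs =>
    pow_le_pow_left₀ (le_of_lt hr) hrs 2
  have hderiv : ∀ r ∈ Ioi (0 : ℝ), HasDerivWithinAt (fun r : ℝ => r ^ 2) (2 * r) (Ioi 0) r :=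
    fun r _ => by simpa using (hasDerivAt_pow 2 r).hasDerivWithinAt
  have hcircle (p : ℝ × ℝ) : c + Complex.polarCoord.symm p = circleMap c p.1 p.2 := by
    simp [circleMap, Complex.exp_mul_I]
  have hm : Measurable fun p : ℝ × ℝ => ENNReal.ofReal p.1 * f (circleMap c p.1 p.2) :=
    (by fun_prop : Measurable fun p : ℝ × ℝ => ENNReal.ofReal p.1).mul
      (hf.comp (by unfold circleMap; fun_prop))
  calc ∫⁻ z, f z
      = ∫⁻ r in Ioi (0 : ℝ), ∫⁻ α in Ioo (-π) π, ENNReal.ofReal r * f (circleMap c r α) := by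
        rw [← lintegral_add_left_eq_self f c]
        simp only [← Complex.lintegral_comp_polarCoord_symm, hcircle, smul_eq_mul]
        exact setLIntegral_prod _ hm.aemeasurable
    _ = ∫⁻ r in Ioi (0 : ℝ), ENNReal.ofReal (2 * r) *
          (2⁻¹ * ∫⁻ α in Ioo (-π) π, f (circleMap c √(r ^ 2) α)) := by
        refine setLIntegral_congr_fun measurableSet_Ioi fun r (hr : 0 < r) => ?_
        rw [lintegral_const_mul' _ _ ENNReal.ofReal_ne_top, Real.sqrt_sq hr.le, ← mul_assoc,
          mul_comm 2 r, ENNReal.ofReal_mul hr.le, mul_assoc (ENNReal.ofReal r)]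
        simp [ENNReal.mul_inv_cancel]
    _ = _ := by
        rw [← lintegral_image_eq_lintegral_deriv_mul_of_monotoneOn measurableSet_Ioi hderiv hmono
          (fun t => 2⁻¹ * ∫⁻ α in Ioo (-π) π, f (circleMap c √t α)), himage]

theorem lintegral_comp_norm_sq {h : ℝ → ℝ≥0∞} (hh : Measurable h) :
    ∫⁻ w : ℂ, h (‖w‖ ^ 2) = ENNReal.ofReal π * ∫⁻ t in Ioi 0, h t := by
  rw [lintegral_eq_lintegral_circleMap_sqrt (by fun_prop) 0, ← lintegral_const_mul _ hh]
  refine setLIntegral_congr_fun measurableSet_Ioi fun t (ht : 0 < t) => ?_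
  have hvol : 2⁻¹ * ENNReal.ofReal (π - -π) = ENNReal.ofReal π := by
    rw [sub_neg_eq_add, ← two_mul, ENNReal.ofReal_mul zero_le_two, ENNReal.ofReal_ofNat,
      ENNReal.inv_mul_cancel_left two_ne_zero ENNReal.ofNat_ne_top]
  simp only [norm_circleMap_zero, sq_abs, Real.sq_sqrt ht.le, setLIntegral_const, Real.volume_Ioo]
  rw [mul_comm (h t), ← mul_assoc, hvol]

section Disc

variable {f : ℂ → ℝ} {c : ℂ} {R : ℝ}

theorem lintegral_ball_eq_lintegral_circleAverage (hR : 0 < R) (hf : ContinuousOn f (ball c R))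
    (hf₀ : ∀ z ∈ ball c R, 0 ≤ f z) :
    ∫⁻ z in ball c R, ENNReal.ofReal (f z) =
      ∫⁻ t in Ioo 0 (R ^ 2), ENNReal.ofReal (π * Real.circleAverage f c √t) := by
  have hm : Measurable ((ball c R).indicator fun z => ENNReal.ofReal (f z)) := by
    classical
    rw [← piecewise_eq_indicator]
    exact (ENNReal.continuous_ofReal.comp_continuousOn hf).measurable_piecewise
      continuousOn_const measurableSet_ball
  rw [← lintegral_indicator measurableSet_ball, lintegral_eq_lintegral_circleMap_sqrt hm c,
    ← Iio_inter_Ioi (b := 0), ← setLIntegral_indicator measurableSet_Iio]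
  refine setLIntegral_congr_fun measurableSet_Ioi fun t _ => ?_
  have hmem (α : ℝ) : circleMap c √t α ∈ ball c R ↔ t ∈ Iio (R ^ 2) := by
    simp [dist_eq_norm, abs_of_nonneg (Real.sqrt_nonneg t), Real.sqrt_lt' hR]
  by_cases htR : t ∈ Iio (R ^ 2)
  · have hcont : Continuous fun α => f (circleMap c √t α) :=
      hf.comp_continuous (continuous_circleMap c √t) fun α => (hmem α).2 htR
    have hint : IntegrableOn (fun α => f (circleMap c √t α)) (Ioo (-π) π) :=
      hcont.integrableOn_Icc.mono_set Ioo_subset_Icc_self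
    have hmean : π * Real.circleAverage f c √t =
        2⁻¹ * ∫ α in Ioo (-π) π, f (circleMap c √t α) := by
      rw [Real.circleAverage_eq_integral_add (-π),
        intervalIntegral.integral_comp_add_right (fun α => f (circleMap c √t α)),
        ← integral_Ioc_eq_integral_Ioo,
        ← intervalIntegral.integral_of_le (by linarith [Real.pi_pos])]
      ring_nf
      field_simp
    simp only [indicator_of_mem, hmem, htR]
    rw [hmean, ENNReal.ofReal_mul (by positivity), ENNReal.ofReal_inv_of_pos two_pos,
      ENNReal.ofReal_ofNat, ofReal_integral_eq_lintegral_ofReal hint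
        (Filter.Eventually.of_forall fun α => hf₀ _ ((hmem α).2 htR))]
  · simp only [indicator_of_notMem, hmem, htR, not_false_eq_true, lintegral_zero, mul_zero]

theorem integrableOn_ball_of_circleAverage (hR : 0 < R) (hf : ContinuousOn f (ball c R))
    (hf₀ : ∀ z ∈ ball c R, 0 ≤ f z)
    (hint : IntegrableOn (fun t => Real.circleAverage f c √t) (Ioo 0 (R ^ 2))) :
    IntegrableOn f (ball c R) := by
  refine ⟨hf.aestronglyMeasurable measurableSet_ball, ?_⟩
  rw [hasFiniteIntegral_iff_ofReal (ae_restrict_of_forall_mem measurableSet_ball hf₀),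
    lintegral_ball_eq_lintegral_circleAverage hR hf hf₀]
  exact (hint.const_mul π).lintegral_lt_top

theorem circleAverage_nonneg_of_ball (hR : 0 < R) (hf₀ : ∀ z ∈ ball c R, 0 ≤ f z) {t : ℝ}
    (ht : t ∈ Ioo 0 (R ^ 2)) : 0 ≤ Real.circleAverage f c √t := by
  refine Real.circleAverage_nonneg_of_nonneg fun z hz => hf₀ z ?_
  rw [mem_sphere, abs_of_nonneg (Real.sqrt_nonneg t)] at hz
  rw [mem_ball, hz, Real.sqrt_lt' hR]
  exact ht.2

theorem integral_ball_eq_integral_circleAverage (hR : 0 < R) (hf : ContinuousOn f (ball c R))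
    (hf₀ : ∀ z ∈ ball c R, 0 ≤ f z)
    (hint : IntegrableOn (fun t => Real.circleAverage f c √t) (Ioo 0 (R ^ 2))) :
    ∫ z in ball c R, f z = π * ∫ t in Ioo 0 (R ^ 2), Real.circleAverage f c √t := by
  rw [integral_eq_lintegral_of_nonneg_ae (ae_restrict_of_forall_mem measurableSet_ball hf₀)
      (hf.aestronglyMeasurable measurableSet_ball),
    lintegral_ball_eq_lintegral_circleAverage hR hf hf₀, ← integral_const_mul,
    integral_eq_lintegral_of_nonneg_ae (ae_restrict_of_forall_mem measurableSet_Ioo fun t ht =>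
      mul_nonneg Real.pi_nonneg (circleAverage_nonneg_of_ball hR hf₀ ht))
      (hint.const_mul π).aestronglyMeasurable]

end Disc

/-! ### Symmetric random variables -/

section Symmetric

variable {Ω : Type*} [MeasurableSpace Ω] {μ : Measure Ω} {Y : Ω → ℝ}

theorem log_one_sub_sq {y : ℝ} (hy : |y| < 1) :
    Real.log (1 - y ^ 2) = Real.log (1 + y) + Real.log (1 - y) := by
  obtain ⟨hy₁, hy₂⟩ := abs_lt.1 hy
  rw [← Real.log_mul (by linarith) (by linarith)]
  ring_nf

theorem abs_log_one_add_le {y : ℝ} (hy : |y| < 1) :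
    |Real.log (1 + y)| ≤ Real.log 2 + |Real.log (1 - y ^ 2)| := by
  obtain ⟨hy₁, hy₂⟩ := abs_lt.1 hy
  have hadd : Real.log (1 + y) ≤ Real.log 2 := Real.log_le_log (by linarith) (by linarith)
  have hsub : Real.log (1 - y) ≤ Real.log 2 := Real.log_le_log (by linarith) (by linarith)
  have hneg := neg_abs_le (Real.log (1 - y ^ 2))
  have hsum := log_one_sub_sq hy
  exact abs_le.2 ⟨by linarith, by linarith [abs_nonneg (Real.log (1 - y ^ 2))]⟩

theorem integrable_log_one_add [IsFiniteMeasure μ] (hY : AEMeasurable Y μ)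
    (hY₁ : ∀ᵐ ω ∂μ, |Y ω| < 1) (hint : Integrable (fun ω => Real.log (1 - Y ω ^ 2)) μ) :
    Integrable (fun ω => Real.log (1 + Y ω)) μ :=
  ((integrable_const (Real.log 2)).add hint.abs).mono'
    (Real.measurable_log.comp_aemeasurable (hY.const_add 1)).aestronglyMeasurable
    (hY₁.mono fun _ => abs_log_one_add_le)

theorem two_mul_integral_log_one_add [IsFiniteMeasure μ] (hY : IdentDistrib Y (-Y) μ μ)
    (hY₁ : ∀ᵐ ω ∂μ, |Y ω| < 1) (hint : Integrable (fun ω => Real.log (1 - Y ω ^ 2)) μ) :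
    2 * ∫ ω, Real.log (1 + Y ω) ∂μ = ∫ ω, Real.log (1 - Y ω ^ 2) ∂μ := by
  have hlog : IdentDistrib (fun ω => Real.log (1 + Y ω)) (fun ω => Real.log (1 - Y ω)) μ μ :=
    hY.comp (u := fun y => Real.log (1 + y)) (by fun_prop)
  have hint₁ := integrable_log_one_add hY.aemeasurable_fst hY₁ hint
  rw [integral_congr_ae (hY₁.mono fun _ => log_one_sub_sq),
    integral_add hint₁ (hlog.integrable_iff.1 hint₁), ← hlog.integral_eq, two_mul]

end Symmetric

/-! ### The unit 3-sphere -/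

instance inst_s18 : IsProbabilityMeasure muH :=
  ⟨Measure.haarMeasure_self (K₀ := ⊤)⟩

instance : muH.IsHaarMeasure := by unfold muH; infer_instance

instance : muH.IsMulRightInvariant where
  map_mul_right_eq_self g := by
    have : IsProbabilityMeasure (muH.map (· * g)) :=
      Measure.isProbabilityMeasure_map (measurable_mul_const g).aemeasurable
    exact Measure.isHaarMeasure_eq_of_isProbabilityMeasure _ _

theorem measurePreserving_unitSphere_mul_left (u : sphere (0 : ℍ) 1) :
    MeasurePreserving fun x : ℍ => (u : ℍ) * x :=
  (LinearIsometry.toLinearIsometryEquiv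
    ⟨LinearMap.mulLeft ℝ (u : ℍ), fun x => by simp⟩ rfl).measurePreserving

theorem lintegral_eq_lintegral_lintegral_norm_smul {F : ℍ → ℝ≥0∞} (hF : Measurable F) :
    ∫⁻ x, F x = ∫⁻ x : ℍ, ∫⁻ q : sphere (0 : ℍ) 1, F (‖x‖ • (q : ℍ)) ∂muH := by
  have hm : Measurable fun p : sphere (0 : ℍ) 1 × ℍ => F (p.1 * p.2) := hF.comp (by fun_prop)
  calc ∫⁻ x, F x
      = ∫⁻ q : sphere (0 : ℍ) 1, (∫⁻ x : ℍ, F (q * x)) ∂muH := by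
        simp [(measurePreserving_unitSphere_mul_left _).lintegral_comp hF]
    _ = ∫⁻ x : ℍ, ∫⁻ q : sphere (0 : ℍ) 1, F (q * x) ∂muH :=
        lintegral_lintegral_swap hm.aemeasurable
    _ = _ := lintegral_congr fun x => ?_
  obtain rfl | hx := eq_or_ne x 0
  · simp
  let u : sphere (0 : ℍ) 1 := ⟨‖x‖⁻¹ • x, by simp [norm_smul, hx]⟩
  have hu (q : sphere (0 : ℍ) 1) : (q : ℍ) * x = ‖x‖ • ((q * u : sphere (0 : ℍ) 1) : ℍ) := by
    simp [u, hx]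
  simp only [hu]
  exact lintegral_mul_right_eq_self (fun q : sphere (0 : ℍ) 1 => F (‖x‖ • (q : ℍ))) u

/-- The isometry `a + b i + c j + d k ↦ (a + b i, c + d i)` of `ℍ` onto `ℂ²`. -/
noncomputable def complexPair : ℍ ≃ₗᵢ[ℝ] WithLp 2 (ℂ × ℂ) where
  toFun q := WithLp.toLp 2 (⟨q.re, q.imI⟩, ⟨q.imJ, q.imK⟩)
  invFun p := ⟨p.fst.re, p.fst.im, p.snd.re, p.snd.im⟩
  map_add' _ _ := rfl
  map_smul' c q := by
    congr 2 <;> apply Complex.ext <;> simp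
  left_inv _ := rfl
  right_inv _ := rfl
  norm_map' q := by
    rw [← sq_eq_sq₀ (norm_nonneg _) (norm_nonneg _), sq ‖q‖, ← Quaternion.normSq_eq_norm_mul_self,
      Quaternion.normSq_def', WithLp.prod_norm_sq_eq_of_L2, Complex.sq_norm, Complex.sq_norm,
      Complex.normSq_apply, Complex.normSq_apply]
    change q.re * q.re + q.imI * q.imI + (q.imJ * q.imJ + q.imK * q.imK) = _
    ring

theorem measurePreserving_complexPair : MeasurePreserving fun x : ℍ => (complexPair x).ofLp :=
  (WithLp.volume_preserving_ofLp ℂ ℂ).comp complexPair.measurePreserving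

theorem setLIntegral_ball_sqrt_comp_smul {f : ℂ → ℝ≥0∞} (hf : Measurable f) {s : ℝ} (hs : 0 < s) :
    ∫⁻ z in ball (0 : ℂ) √s, f ((√s)⁻¹ • z) = ENNReal.ofReal s * ∫⁻ z in ball 0 1, f z := by
  have hs' : 0 < (√s)⁻¹ := inv_pos.2 (Real.sqrt_pos.2 hs)
  have hpre : ((√s)⁻¹ • ·) ⁻¹' ball (0 : ℂ) 1 = ball 0 √s := by
    ext z
    simp [abs_of_nonneg, inv_mul_lt_iff₀ (Real.sqrt_pos.2 hs)]
  rw [← hpre, ← setLIntegral_map measurableSet_ball hf (measurable_const_smul _),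
    Measure.map_addHaar_smul volume hs'.ne', Measure.restrict_smul, lintegral_smul_measure]
  simp [hs.le, abs_of_pos hs]

theorem setLIntegral_Ioi_zero_comp_add_left {h : ℝ → ℝ≥0∞} (hh : Measurable h) (c : ℝ) :
    ∫⁻ t in Ioi 0, h (c + t) = ∫⁻ s in Ioi c, h s := by
  simpa using (measurePreserving_add_left volume c).setLIntegral_comp_preimage
    (measurableSet_Ioi (a := c)) hh

theorem lintegral_lintegral_radial_mul_comp_smul {f : ℂ → ℝ≥0∞} {g : ℝ → ℝ≥0∞}
    (hf : Measurable f) (hg : Measurable g) :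
    ∫⁻ z : ℂ, ∫⁻ w : ℂ, g (‖z‖ ^ 2 + ‖w‖ ^ 2) * f ((√(‖z‖ ^ 2 + ‖w‖ ^ 2))⁻¹ • z) =
      ENNReal.ofReal π * (∫⁻ s in Ioi 0, g s * ENNReal.ofReal s) * ∫⁻ z in ball 0 1, f z := by
  let H (z : ℂ) (s : ℝ) : ℝ≥0∞ := g s * f ((√s)⁻¹ • z)
  have hS : MeasurableSet {p : ℂ × ℝ | ‖p.1‖ ^ 2 < p.2} :=
    measurableSet_lt (by fun_prop) measurable_snd
  have hH : Measurable ({p : ℂ × ℝ | ‖p.1‖ ^ 2 < p.2}.indicator fun p => H p.1 p.2) :=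
    Measurable.indicator (by fun_prop) hS
  calc _
      = ∫⁻ z : ℂ, ENNReal.ofReal π * ∫⁻ s in Ioi (‖z‖ ^ 2), H z s := by
        refine lintegral_congr fun z => ?_
        rw [lintegral_comp_norm_sq (h := fun t => H z (‖z‖ ^ 2 + t)) (by fun_prop),
          setLIntegral_Ioi_zero_comp_add_left (by fun_prop)]
    _ = ENNReal.ofReal π * ∫⁻ z : ℂ, ∫⁻ s in Ioi 0,
          {p : ℂ × ℝ | ‖p.1‖ ^ 2 < p.2}.indicator (fun p => H p.1 p.2) (z, s) := by
        rw [lintegral_const_mul' _ _ ENNReal.ofReal_ne_top]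
        congr with z
        rw [← inter_eq_left.2 (Ioi_subset_Ioi (sq_nonneg ‖z‖)),
          ← setLIntegral_indicator measurableSet_Ioi]
        rfl
    _ = ENNReal.ofReal π * ∫⁻ s in Ioi 0, ∫⁻ z in ball (0 : ℂ) √s, H z s := by
        rw [lintegral_lintegral_swap (f := fun z s =>
          {p : ℂ × ℝ | ‖p.1‖ ^ 2 < p.2}.indicator (fun p => H p.1 p.2) (z, s)) hH.aemeasurable]
        congr with s
        rw [← lintegral_indicator measurableSet_ball]
        congr with z
        simp [indicator, Real.lt_sqrt]
    _ = _ := by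
        rw [mul_assoc, ← lintegral_mul_const _ (by fun_prop)]
        congr 1
        refine setLIntegral_congr_fun measurableSet_Ioi fun s (hs : 0 < s) => ?_
        rw [lintegral_const_mul _ (by fun_prop), setLIntegral_ball_sqrt_comp_smul hf hs, mul_assoc]

theorem lintegral_radial_mul_lintegral_complexPair_fst {f : ℂ → ℝ≥0∞} {g : ℝ → ℝ≥0∞}
    (hf : Measurable f) (hg : Measurable g) :
    (∫⁻ x : ℍ, g (‖x‖ ^ 2)) * ∫⁻ q : sphere (0 : ℍ) 1, f (complexPair q).fst ∂muH =
      ENNReal.ofReal π * (∫⁻ s in Ioi 0, g s * ENNReal.ofReal s) * ∫⁻ z in ball 0 1, f z := by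
  let F (p : ℂ × ℂ) : ℝ≥0∞ :=
    g (‖p.1‖ ^ 2 + ‖p.2‖ ^ 2) * f ((√(‖p.1‖ ^ 2 + ‖p.2‖ ^ 2))⁻¹ • p.1)
  have hF : Measurable F := by fun_prop
  have hFx (x : ℍ) :
      F (complexPair x).ofLp = g (‖x‖ ^ 2) * f (‖x‖⁻¹ • (complexPair x).fst) := by
    rw [← complexPair.norm_map x, WithLp.prod_norm_eq_of_L2, Real.sq_sqrt (by positivity)]
    rfl
  have hne : ∀ᵐ x : ℍ, x ≠ 0 := by simp [ae_iff, measure_singleton]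
  rw [← lintegral_lintegral_radial_mul_comp_smul hf hg, lintegral_lintegral hF.aemeasurable,
    ← Measure.volume_eq_prod, ← measurePreserving_complexPair.lintegral_comp hF,
    lintegral_eq_lintegral_lintegral_norm_smul
      (F := fun x => F (complexPair x).ofLp) (hF.comp measurePreserving_complexPair.measurable),
    ← lintegral_mul_const _ (by fun_prop)]
  refine lintegral_congr_ae (hne.mono fun x hx => ?_)
  simp only [hFx]
  rw [← lintegral_const_mul _ (by fun_prop)]
  simp [norm_smul, hx]

/- Archimedes' hat-box theorem in codimension two. The weight `1 / s` cancels the area of the disc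
of radius `√s`, up to `π`. -/
theorem measurePreserving_complexPair_fst :
    MeasurePreserving (fun q : sphere (0 : ℍ) 1 => (complexPair q).fst) muH
      (volume[|ball (0 : ℂ) 1]) := by
  have hm : Measurable fun q : sphere (0 : ℍ) 1 => (complexPair q).fst := by fun_prop
  refine ⟨hm, Measure.ext_of_lintegral _ fun f hf => ?_⟩
  let g (s : ℝ) : ℝ≥0∞ := (Iio 1).indicator (fun s => (ENNReal.ofReal s)⁻¹) s
  have hg : Measurable g := by measurability
  have hw : ∫⁻ s in Ioi 0, g s * ENNReal.ofReal s = 1 := by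
    calc _ = ∫⁻ s in Ioi (0 : ℝ), (Iio 1).indicator 1 s := by
          refine setLIntegral_congr_fun measurableSet_Ioi fun s (hs : 0 < s) => ?_
          by_cases h1 : s ∈ Iio 1 <;> simp [g, h1, ENNReal.inv_mul_cancel, hs]
      _ = 1 := by
          rw [setLIntegral_indicator measurableSet_Iio, Iio_inter_Ioi]
          simp
  have hmass : ∫⁻ x : ℍ, g (‖x‖ ^ 2) = ENNReal.ofReal π * volume (ball (0 : ℂ) 1) := by
    simpa [hw] using lintegral_radial_mul_lintegral_complexPair_fst (f := 1) measurable_one hg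
  have h := lintegral_radial_mul_lintegral_complexPair_fst hf hg
  rw [hw, hmass, mul_one, mul_assoc,
    ENNReal.mul_right_inj (by simp [Real.pi_pos]) ENNReal.ofReal_ne_top] at h
  rw [lintegral_map hf hm, ProbabilityTheory.cond, lintegral_smul_measure, ← h, smul_eq_mul,
    ENNReal.inv_mul_cancel_left (measure_ball_pos _ _ one_pos).ne' measure_ball_lt_top.ne]

/-! ### Reduction to the unit disc -/

theorem re_conj_unitSphere (p q : sphere (0 : ℍ) 1) :
    ((p * q * p⁻¹ : sphere (0 : ℍ) 1) : ℍ).re = (q : ℍ).re := by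
  have hp : (p : ℍ) ≠ 0 := ne_zero_of_mem_unit_sphere p
  have hcomm (x y : ℍ) : (x * y).re = (y * x).re := by
    simp only [Quaternion.re_mul]
    ring
  rw [unitSphere.coe_mul, hcomm, unitSphere.coe_inv, unitSphere.coe_mul, inv_mul_cancel_left₀ hp]

/-- The function `X = -b + a d` of `a + b i + c j + d k`, for which
`|(q - i) ∗ (q - j)|² = 4 (1 + X q)` on `T¹(ℍ)`. -/
def starDeviation (q : ℍ) : ℝ := -q.imI + q.re * q.imK

/-- The function `√(1 + a²) b` of `a + b i`, which is `starDeviation` after a conjugation and has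
the same law when `a + b i` is uniform on the unit disc. -/
noncomputable def discDeviation (z : ℂ) : ℝ := √(1 + z.re ^ 2) * z.im

theorem continuous_starDeviation : Continuous starDeviation :=
  Quaternion.continuous_imI.neg.add (Quaternion.continuous_re.mul Quaternion.continuous_imK)

theorem continuous_discDeviation : Continuous discDeviation := by
  unfold discDeviation
  fun_prop

/- Conjugation by `-sin φ + cos φ j` rotates the `(i, k)`-plane by the angle `2φ + π`, so
`tan 2φ = a` turns the linear form `-b + a d` into `√(1 + a²) b`. -/
theorem exists_conj_neg_imI_add_mul_imK (a : ℝ) :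
    ∃ g : sphere (0 : ℍ) 1, ∀ q : sphere (0 : ℍ) 1,
      -((g * q * g⁻¹ : sphere (0 : ℍ) 1) : ℍ).imI +
        a * ((g * q * g⁻¹ : sphere (0 : ℍ) 1) : ℍ).imK = √(1 + a ^ 2) * (q : ℍ).imI := by
  let φ := Real.arctan a / 2
  obtain ⟨g, hre, hI, hJ, hK⟩ :
      ∃ g : ℍ, g.re = -Real.sin φ ∧ g.imI = 0 ∧ g.imJ = Real.cos φ ∧ g.imK = 0 :=
    ⟨⟨-Real.sin φ, 0, Real.cos φ, 0⟩, rfl, rfl, rfl, rfl⟩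
  have hs : √(1 + a ^ 2) ^ 2 = 1 + a ^ 2 := Real.sq_sqrt (by positivity)
  have hφ : Real.arctan a = 2 * φ := by ring
  have hcos : Real.cos φ ^ 2 - Real.sin φ ^ 2 = 1 / √(1 + a ^ 2) := by
    rw [← Real.cos_arctan, hφ, Real.cos_two_mul']
  have hsin : 2 * Real.sin φ * Real.cos φ = a / √(1 + a ^ 2) := by
    rw [← Real.sin_arctan, hφ, Real.sin_two_mul]
  have hg : Quaternion.normSq g = 1 := by simp [Quaternion.normSq_def', hre, hI, hJ, hK]
  have hginv : g⁻¹ = star g := inv_eq_of_mul_eq_one_right (by simp [Quaternion.self_mul_star, hg])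
  have hmem : g ∈ sphere (0 : ℍ) 1 := by
    rw [mem_sphere_zero_iff_norm, ← sq_eq_sq₀ (norm_nonneg _) zero_le_one, sq,
      ← Quaternion.normSq_eq_norm_mul_self, hg, one_pow]
  have hcoef₁ : a * (Real.cos φ ^ 2 - Real.sin φ ^ 2) = 2 * Real.sin φ * Real.cos φ := by
    rw [hcos, hsin]
    ring
  have hcoef₂ : (Real.cos φ ^ 2 - Real.sin φ ^ 2) + a * (2 * Real.sin φ * Real.cos φ) =
      √(1 + a ^ 2) := by
    rw [hcos, hsin]
    field_simp
    rw [hs]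
  refine ⟨⟨g, hmem⟩, fun q => ?_⟩
  simp only [unitSphere.coe_mul, unitSphere.coe_inv, hginv, Quaternion.imI_mul, Quaternion.imK_mul,
    Quaternion.re_mul, Quaternion.imJ_mul, Quaternion.re_star, Quaternion.imI_star,
    Quaternion.imJ_star, Quaternion.imK_star, hre, hI, hJ, hK]
  linear_combination (q : ℍ).imI * hcoef₂ - (q : ℍ).imK * hcoef₁

theorem identDistrib_starDeviation_discDeviation :
    IdentDistrib (fun q : sphere (0 : ℍ) 1 => starDeviation q) discDeviation muH
      (volume[|ball (0 : ℂ) 1]) := by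
  have hX : Measurable fun q : sphere (0 : ℍ) 1 => starDeviation q :=
    (continuous_starDeviation.comp continuous_subtype_val).measurable
  have hY : Measurable discDeviation := continuous_discDeviation.measurable
  have hfst := measurePreserving_complexPair_fst
  refine (identDistrib_of_forall_exists_conj muH hX (hY.comp hfst.measurable) fun q => ?_).trans
    ⟨(hY.comp hfst.measurable).aemeasurable, hY.aemeasurable, ?_⟩
  · obtain ⟨g, hg⟩ := exists_conj_neg_imI_add_mul_imK (q : ℍ).re
    refine ⟨g, fun p => ?_⟩
    rw [starDeviation, re_conj_unitSphere, re_conj_unitSphere, hg, ← re_conj_unitSphere p q]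
    rfl
  · rw [← Measure.map_map hY hfst.measurable, hfst.map_eq]

theorem sum_sq_unitSphere (q : sphere (0 : ℍ) 1) :
    (q : ℍ).re ^ 2 + (q : ℍ).imI ^ 2 + (q : ℍ).imJ ^ 2 + (q : ℍ).imK ^ 2 = 1 := by
  rw [← Quaternion.normSq_def', Quaternion.normSq_eq_norm_mul_self, norm_eq_of_mem_sphere, one_mul]

theorem norm_sq_star_sub_i_sub_j (q : sphere (0 : ℍ) 1) :
    ‖(q : ℍ) ^ 2 - q * (qI + qJ) + qK‖ ^ 2 = 4 * (1 + starDeviation q) := by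
  have hsphere := sum_sq_unitSphere q
  have hI : qI.re = 0 ∧ qI.imI = 1 ∧ qI.imJ = 0 ∧ qI.imK = 0 := ⟨rfl, rfl, rfl, rfl⟩
  have hJ : qJ.re = 0 ∧ qJ.imI = 0 ∧ qJ.imJ = 1 ∧ qJ.imK = 0 := ⟨rfl, rfl, rfl, rfl⟩
  have hK : qK.re = 0 ∧ qK.imI = 0 ∧ qK.imJ = 0 ∧ qK.imK = 1 := ⟨rfl, rfl, rfl, rfl⟩
  rw [starDeviation, sq ‖_‖, ← Quaternion.normSq_eq_norm_mul_self, Quaternion.normSq_def']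
  simp only [sq (q : ℍ), Quaternion.re_add, Quaternion.imI_add, Quaternion.imJ_add,
    Quaternion.imK_add, Quaternion.re_sub, Quaternion.imI_sub, Quaternion.imJ_sub,
    Quaternion.imK_sub, Quaternion.re_mul, Quaternion.imI_mul, Quaternion.imJ_mul,
    Quaternion.imK_mul, hI, hJ, hK]
  grind

/-! ### Jensen's formula on circles -/

theorem quadratic_ne_zero_of_norm_le_one {m n k : ℝ} (hk : 0 < k) (hkm : k < m)
    (hdisc : discrim k n m < 0) {ζ : ℂ} (hζ : ‖ζ‖ ≤ 1) : m + n * ζ + k * ζ ^ 2 ≠ 0 := by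
  intro h
  have hre : m + n * ζ.re + k * (ζ.re ^ 2 - ζ.im ^ 2) = 0 := by
    simpa [sq] using congrArg Complex.re h
  have him : ζ.im * (n + 2 * k * ζ.re) = 0 := by
    have him' := congrArg Complex.im h
    simp only [sq, Complex.add_im, Complex.mul_im, Complex.mul_re, Complex.ofReal_re,
      Complex.ofReal_im, Complex.zero_im] at him'
    linear_combination him'
  have hnorm : ζ.re ^ 2 + ζ.im ^ 2 ≤ 1 := by
    rw [← Complex.normSq_add_mul_I, Complex.re_add_im, Complex.normSq_eq_norm_sq]
    exact pow_le_one₀ (norm_nonneg _) hζ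
  rw [discrim] at hdisc
  obtain hreal | hconj := mul_eq_zero.1 him
  · rw [hreal] at hre
    nlinarith [sq_nonneg (2 * k * ζ.re + n)]
  · have hm : m = k * (ζ.re ^ 2 + ζ.im ^ 2) := by linear_combination hre - ζ.re * hconj
    nlinarith

theorem circleAverage_log_norm_biquadratic {m n k : ℝ} (hk : 0 < k) (hkm : k < m)
    (hdisc : discrim k n m < 0) :
    Real.circleAverage (fun z => Real.log ‖m + n * z ^ 2 + k * (z ^ 2) ^ 2‖) 0 1 = Real.log m := by
  rw [AnalyticOnNhd.circleAverage_log_norm_of_ne_zero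
    (g := fun z : ℂ => m + n * z ^ 2 + k * (z ^ 2) ^ 2) (fun z _ => by fun_prop)]
  · simp
  · intro z hz
    have hz1 : ‖z‖ ≤ 1 := by simpa using hz
    exact quadratic_ne_zero_of_norm_le_one hk hkm hdisc
      ((norm_pow z 2).trans_le (pow_le_one₀ (norm_nonneg z) hz1))

/- Fejér–Riesz factorisation of a trigonometric polynomial in twice the argument of `z`. -/
theorem one_sub_eq_norm_sq_biquadratic {η h ρ : ℝ} (hρ : ρ ^ 2 = 1 - η ^ 2)
    (hh : h ^ 2 = η * (2 - η)) {z : ℂ} (hz : ‖z‖ = 1) :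
    1 - (1 + (ρ * z.re) ^ 2) * (ρ * z.im) ^ 2 =
      ‖((1 + η) * (1 + h) / 4 : ℝ) + ((1 - η) / 2 : ℝ) * z ^ 2 +
        ((1 + η) * (1 - h) / 4 : ℝ) * (z ^ 2) ^ 2‖ ^ 2 := by
  have hunit : z.re ^ 2 + z.im ^ 2 = 1 := by
    rw [← Complex.normSq_add_mul_I, Complex.re_add_im, Complex.normSq_eq_norm_sq, hz, one_pow]
  rw [← Complex.normSq_eq_norm_sq, Complex.normSq_apply]
  simp only [Complex.add_re, Complex.add_im, Complex.ofReal_re, Complex.ofReal_im, sq z,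
    sq (z * z), Complex.mul_re, Complex.mul_im]
  grind

theorem circleAverage_log_one_sub {η ρ : ℝ} (hη₀ : 0 < η) (hη₁ : η < 1) (hρ : ρ ^ 2 = 1 - η ^ 2) :
    Real.circleAverage (fun z => Real.log (1 - (1 + z.re ^ 2) * z.im ^ 2)) 0 ρ =
      2 * Real.log ((1 + η) * (1 + √(η * (2 - η))) / 4) := by
  set h := √(η * (2 - η))
  have hh : h ^ 2 = η * (2 - η) := Real.sq_sqrt (by nlinarith)
  have hh₀ : 0 < h := Real.sqrt_pos.2 (by nlinarith)
  have hh₁ : h < 1 := by nlinarith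
  have hk : 0 < (1 + η) * (1 - h) / 4 := by nlinarith
  have hkm : (1 + η) * (1 - h) / 4 < (1 + η) * (1 + h) / 4 := by nlinarith
  have hdisc : discrim ((1 + η) * (1 - h) / 4) ((1 - η) / 2) ((1 + η) * (1 + h) / 4) < 0 :=
    calc _ = -((1 - η) ^ 2 * (η * (2 + η)) / 4) := by
          rw [discrim]
          linear_combination (1 + η) ^ 2 / 4 * hh
      _ < 0 := by
          have := sub_pos.2 hη₁
          rw [neg_lt_zero]
          positivity
  rw [Real.circleAverage_eq_circleAverage_zero_one,
    ← circleAverage_log_norm_biquadratic hk hkm hdisc, ← smul_eq_mul, ← Real.circleAverage_fun_smul]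
  refine Real.circleAverage_congr_sphere fun z hz => ?_
  have hz1 : ‖z‖ = 1 := by simpa using hz
  simp [one_sub_eq_norm_sq_biquadratic hρ hh hz1]

/-! ### The radial integral -/

theorem hasDerivAt_log_trig_primitive {t : ℝ} (ht : -1 < Real.sin t) :
    HasDerivAt (fun t => -(Real.cos t * (2 - Real.cos t) / 2 *
        Real.log ((2 - Real.cos t) * (1 + Real.sin t) / 4)) + t + Real.cos t -
        Real.sin t / 2 + Real.sin t ^ 2 / 2)
      ((1 - Real.cos t) * Real.sin t * Real.log ((2 - Real.cos t) * (1 + Real.sin t) / 4)) t := by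
  have hc : 0 < 2 - Real.cos t := by linarith [Real.cos_le_one t]
  have hs : 0 < 1 + Real.sin t := by linarith
  have hC := Real.hasDerivAt_cos t
  have hS := Real.hasDerivAt_sin t
  have hlog := (((hC.const_sub 2).mul (hS.const_add 1)).div_const 4).log
    (div_pos (mul_pos hc hs) four_pos).ne'
  refine (((((((hC.mul (hC.const_sub 2)).div_const 2).mul hlog).neg.add
    (hasDerivAt_id t)).add hC).sub (hS.div_const 2)).add ((hS.pow 2).div_const 2)).congr_deriv ?_
  have hsq := Real.sin_sq_add_cos_sq t
  simp only [Pi.mul_apply]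
  field_simp
  ring_nf
  grind

theorem integral_one_sub_cos_mul_sin_mul_log :
    ∫ t in 0..π / 2, (1 - Real.cos t) * Real.sin t *
        Real.log ((2 - Real.cos t) * (1 + Real.sin t) / 4) = π / 2 - 1 - Real.log 2 := by
  have hle : 0 ≤ π / 2 := by positivity
  have hsin : ∀ t ∈ uIcc 0 (π / 2), 0 ≤ Real.sin t := by
    intro t ht
    rw [uIcc_of_le hle] at ht
    exact Real.sin_nonneg_of_nonneg_of_le_pi ht.1 (by linarith [ht.2])
  have hne : ∀ t ∈ uIcc 0 (π / 2), (2 - Real.cos t) * (1 + Real.sin t) / 4 ≠ 0 := by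
    intro t ht
    nlinarith [hsin t ht, Real.cos_le_one t]
  have hint := ContinuousOn.intervalIntegrable (μ := volume) (ContinuousOn.mul
    (by fun_prop : ContinuousOn (fun t => (1 - Real.cos t) * Real.sin t) (uIcc 0 (π / 2)))
    (ContinuousOn.log (by fun_prop) hne))
  have hlog : Real.log ((2 - 1) * (1 + 0) / 4) = -(2 * Real.log 2) := by
    rw [show ((2 : ℝ) - 1) * (1 + 0) / 4 = (2 ^ 2)⁻¹ by norm_num, Real.log_inv, Real.log_pow,
      Nat.cast_ofNat]
  rw [intervalIntegral.integral_eq_sub_of_hasDerivAt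
    (fun t ht => hasDerivAt_log_trig_primitive (neg_one_lt_zero.trans_le (hsin t ht))) hint]
  simp only [Real.cos_pi_div_two, Real.sin_pi_div_two, Real.cos_zero, Real.sin_zero]
  rw [hlog]
  ring

/- The substitution `v = (1 - cos t)²` removes both roots: `√v = 1 - cos t` and
`√(√v * (2 - √v)) = sin t`. -/
theorem integral_log_one_add_sqrt :
    ∫ v in 0..1, 2 * Real.log ((1 + √v) * (1 + √(√v * (2 - √v))) / 4) =
      2 * π - 4 - 4 * Real.log 2 := by
  have hcont : Continuous fun v => 2 * Real.log ((1 + √v) * (1 + √(√v * (2 - √v))) / 4) :=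
    continuous_const.mul (Continuous.log (by fun_prop) fun v => by positivity)
  have hderiv (t : ℝ) : HasDerivAt (fun t => (1 - Real.cos t) ^ 2)
      (2 * (1 - Real.cos t) * Real.sin t) t := by
    simpa using ((Real.hasDerivAt_cos t).const_sub 1).fun_pow 2
  have hle : 0 ≤ π / 2 := by positivity
  have hpull (t : ℝ) (ht : t ∈ uIcc 0 (π / 2)) :
      2 * Real.log ((1 + √((1 - Real.cos t) ^ 2)) *
          (1 + √(√((1 - Real.cos t) ^ 2) * (2 - √((1 - Real.cos t) ^ 2)))) / 4) *
        (2 * (1 - Real.cos t) * Real.sin t) =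
      4 * ((1 - Real.cos t) * Real.sin t *
        Real.log ((2 - Real.cos t) * (1 + Real.sin t) / 4)) := by
    rw [uIcc_of_le hle] at ht
    have hs := Real.sin_nonneg_of_nonneg_of_le_pi ht.1 (by linarith [ht.2])
    have hsin : (1 - Real.cos t) * (2 - (1 - Real.cos t)) = Real.sin t ^ 2 := by
      rw [Real.sin_sq]
      ring
    rw [Real.sqrt_sq (sub_nonneg.2 (Real.cos_le_one t)), hsin, Real.sqrt_sq hs]
    ring_nf
  have hsub := intervalIntegral.integral_comp_mul_deriv (a := 0) (b := π / 2)
    (fun t _ => hderiv t) (by fun_prop) hcont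
  simp only [Function.comp_apply, Real.cos_zero, Real.cos_pi_div_two, sub_self, sub_zero, one_pow,
    zero_pow two_ne_zero] at hsub
  rw [← hsub, intervalIntegral.integral_congr hpull, intervalIntegral.integral_const_mul,
    integral_one_sub_cos_mul_sin_mul_log]
  ring

/-! ### The integral over the disc -/

theorem discDeviation_sq (z : ℂ) : discDeviation z ^ 2 = (1 + z.re ^ 2) * z.im ^ 2 := by
  rw [discDeviation, mul_pow, Real.sq_sqrt (by positivity)]

theorem abs_discDeviation_lt_one {z : ℂ} (hz : z ∈ ball 0 1) : |discDeviation z| < 1 := by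
  have hball : z.re ^ 2 + z.im ^ 2 < 1 := by
    rw [← Complex.normSq_add_mul_I, Complex.re_add_im, Complex.normSq_eq_norm_sq]
    exact pow_lt_one₀ (norm_nonneg z) (mem_ball_zero_iff.1 hz) two_ne_zero
  rw [← sq_lt_one_iff_abs_lt_one, discDeviation_sq]
  nlinarith [sq_nonneg (z.re ^ 2), sq_nonneg z.re]

theorem circleAverage_neg_log_one_sub_discDeviation_sq {t : ℝ} (ht : t ∈ Ioo 0 1) :
    Real.circleAverage (fun z => -Real.log (1 - discDeviation z ^ 2)) 0 √t =
      -(2 * Real.log ((1 + √(1 - t)) * (1 + √(√(1 - t) * (2 - √(1 - t)))) / 4)) := by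
  have hρ : √t ^ 2 = 1 - √(1 - t) ^ 2 := by
    rw [Real.sq_sqrt ht.1.le, Real.sq_sqrt (sub_nonneg.2 ht.2.le), sub_sub_cancel]
  have hη₀ : 0 < √(1 - t) := Real.sqrt_pos.2 (sub_pos.2 ht.2)
  have hη₁ : √(1 - t) < 1 := by
    rw [Real.sqrt_lt' one_pos]
    linarith [ht.1]
  rw [← circleAverage_log_one_sub hη₀ hη₁ hρ, ← neg_one_smul ℝ (Real.circleAverage _ _ _),
    ← Real.circleAverage_fun_smul]
  simp only [discDeviation_sq, neg_one_smul]

theorem integrableOn_circleAverage_neg_log_one_sub_discDeviation_sq :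
    IntegrableOn (fun t => Real.circleAverage (fun z => -Real.log (1 - discDeviation z ^ 2)) 0 √t)
      (Ioo 0 1) := by
  have hcont : Continuous fun t : ℝ =>
      -(2 * Real.log ((1 + √(1 - t)) * (1 + √(√(1 - t) * (2 - √(1 - t)))) / 4)) :=
    (continuous_const.mul (Continuous.log (by fun_prop) fun t => by positivity)).neg
  exact (hcont.integrableOn_Icc.mono_set Ioo_subset_Icc_self).congr_fun
    (fun t ht => (circleAverage_neg_log_one_sub_discDeviation_sq ht).symm) measurableSet_Ioo

theorem integral_circleAverage_neg_log_one_sub_discDeviation_sq :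
    ∫ t in Ioo 0 1, Real.circleAverage (fun z => -Real.log (1 - discDeviation z ^ 2)) 0 √t =
      4 + 4 * Real.log 2 - 2 * π := by
  rw [setIntegral_congr_fun measurableSet_Ioo
      fun t ht => circleAverage_neg_log_one_sub_discDeviation_sq ht,
    integral_neg, ← integral_Ioc_eq_integral_Ioo, ← intervalIntegral.integral_of_le zero_le_one,
    intervalIntegral.integral_comp_sub_left
      (fun v => 2 * Real.log ((1 + √v) * (1 + √(√v * (2 - √v))) / 4)),
    sub_self, sub_zero, integral_log_one_add_sqrt]
  ring

theorem one_sub_discDeviation_sq_pos {z : ℂ} (hz : z ∈ ball 0 1) : 0 < 1 - discDeviation z ^ 2 :=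
  sub_pos.2 ((sq_lt_one_iff_abs_lt_one _).2 (abs_discDeviation_lt_one hz))

theorem continuousOn_neg_log_one_sub_discDeviation_sq :
    ContinuousOn (fun z => -Real.log (1 - discDeviation z ^ 2)) (ball 0 1) :=
  (ContinuousOn.log (continuous_const.sub (continuous_discDeviation.pow 2)).continuousOn
    fun _ hz => (one_sub_discDeviation_sq_pos hz).ne').neg

theorem neg_log_one_sub_discDeviation_sq_nonneg {z : ℂ} (hz : z ∈ ball 0 1) :
    0 ≤ -Real.log (1 - discDeviation z ^ 2) :=
  neg_nonneg.2 (Real.log_nonpos (one_sub_discDeviation_sq_pos hz).le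
    (sub_le_self 1 (sq_nonneg _)))

theorem integrable_log_one_sub_discDeviation_sq :
    Integrable (fun z => Real.log (1 - discDeviation z ^ 2)) (volume[|ball (0 : ℂ) 1]) := by
  have hball : IntegrableOn (fun z => Real.log (1 - discDeviation z ^ 2)) (ball 0 1) := by
    rw [← integrableOn_fun_neg_iff]
    refine integrableOn_ball_of_circleAverage one_pos continuousOn_neg_log_one_sub_discDeviation_sq
      (fun _ => neg_log_one_sub_discDeviation_sq_nonneg) ?_
    simpa only [one_pow] using integrableOn_circleAverage_neg_log_one_sub_discDeviation_sq
  exact hball.smul_measure (ENNReal.inv_ne_top.2 (measure_ball_pos _ _ one_pos).ne')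

theorem integral_log_one_sub_discDeviation_sq :
    ∫ z, Real.log (1 - discDeviation z ^ 2) ∂volume[|ball (0 : ℂ) 1] =
      2 * π - 4 - 4 * Real.log 2 := by
  have hball := integral_ball_eq_integral_circleAverage one_pos
    continuousOn_neg_log_one_sub_discDeviation_sq
    (fun _ => neg_log_one_sub_discDeviation_sq_nonneg)
    (by simpa only [one_pow] using integrableOn_circleAverage_neg_log_one_sub_discDeviation_sq)
  rw [one_pow, integral_circleAverage_neg_log_one_sub_discDeviation_sq, integral_neg,
    neg_eq_iff_eq_neg] at hball
  rw [ProbabilityTheory.cond, integral_smul_measure, hball]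
  have hvol : (volume (ball (0 : ℂ) 1)).toReal = π := by simp
  rw [ENNReal.toReal_inv, hvol, smul_eq_mul]
  field_simp
  ring

theorem ae_abs_discDeviation_lt_one : ∀ᵐ z ∂volume[|ball (0 : ℂ) 1], |discDeviation z| < 1 :=
  (ae_cond_mem measurableSet_ball).mono fun _ => abs_discDeviation_lt_one

theorem measurePreserving_conj_cond_ball :
    MeasurePreserving (starRingEnd ℂ) (volume[|ball (0 : ℂ) 1]) (volume[|ball (0 : ℂ) 1]) := by
  have hball : Complex.conjLIE ⁻¹' ball 0 1 = ball 0 1 := by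
    simp
  have h := Complex.conjLIE.measurePreserving.restrict_preimage
    (measurableSet_ball (x := 0) (ε := 1))
  rw [hball] at h
  exact h.smul_measure _

theorem identDistrib_discDeviation_neg :
    IdentDistrib discDeviation (-discDeviation) (volume[|ball (0 : ℂ) 1])
      (volume[|ball (0 : ℂ) 1]) := by
  have hY := continuous_discDeviation.measurable
  refine ⟨hY.aemeasurable, hY.neg.aemeasurable, ?_⟩
  have hneg : -discDeviation = discDeviation ∘ starRingEnd ℂ := by
    ext z
    simp [discDeviation]
  rw [hneg, ← Measure.map_map hY Complex.continuous_conj.measurable,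
    measurePreserving_conj_cond_ball.map_eq]

theorem integrable_log_one_add_discDeviation :
    Integrable (fun z => Real.log (1 + discDeviation z)) (volume[|ball (0 : ℂ) 1]) :=
  integrable_log_one_add continuous_discDeviation.aemeasurable ae_abs_discDeviation_lt_one
    integrable_log_one_sub_discDeviation_sq

theorem integral_log_one_add_discDeviation :
    ∫ z, Real.log (1 + discDeviation z) ∂volume[|ball (0 : ℂ) 1] = π - 2 - 2 * Real.log 2 := by
  have h := two_mul_integral_log_one_add identDistrib_discDeviation_neg ae_abs_discDeviation_lt_one
    integrable_log_one_sub_discDeviation_sq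
  rw [integral_log_one_sub_discDeviation_sq] at h
  linarith

theorem log_norm_star_sub_i_sub_j (q : sphere (0 : ℍ) 1) :
    Real.log ‖(q : ℍ) ^ 2 - q * (qI + qJ) + qK‖ =
      Real.log (4 * (1 + starDeviation q)) / 2 := by
  rw [← norm_sq_star_sub_i_sub_j, Real.log_pow, Nat.cast_ofNat]
  ring

theorem log_four_mul_one_add_div_two {y : ℝ} (hy : |y| < 1) :
    Real.log (4 * (1 + y)) / 2 = Real.log 2 + Real.log (1 + y) / 2 := by
  have hy' : 1 + y ≠ 0 := by linarith [(abs_lt.1 hy).1]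
  rw [Real.log_mul four_ne_zero hy', show (4 : ℝ) = 2 ^ 2 by norm_num, Real.log_pow]
  push_cast
  ring

/-- `m_ℍ((x - i) ∗ (x - j)) = π/2 - 1`. -/
theorem mahlerH_star_sub_i_sub_j :
    mahlerH (fun q => q ^ 2 - q * (qI + qJ) + qK) = Real.pi / 2 - 1 := by
  calc mahlerH (fun q => q ^ 2 - q * (qI + qJ) + qK)
      = ∫ q : sphere (0 : ℍ) 1, Real.log (4 * (1 + starDeviation q)) / 2 ∂muH :=
        integral_congr_ae (.of_forall log_norm_star_sub_i_sub_j)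
    _ = ∫ z, Real.log (4 * (1 + discDeviation z)) / 2 ∂volume[|ball (0 : ℂ) 1] :=
        (identDistrib_starDeviation_discDeviation.comp
          (u := fun y => Real.log (4 * (1 + y)) / 2) (by fun_prop)).integral_eq
    _ = ∫ z, (Real.log 2 + Real.log (1 + discDeviation z) / 2) ∂volume[|ball (0 : ℂ) 1] :=
        integral_congr_ae
          (ae_abs_discDeviation_lt_one.mono fun _ => log_four_mul_one_add_div_two)
    _ = Real.log 2 + (π - 2 - 2 * Real.log 2) / 2 := by
        have : IsProbabilityMeasure (volume[|ball (0 : ℂ) 1]) :=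
          cond_isProbabilityMeasure_of_finite (measure_ball_pos _ _ one_pos).ne'
            measure_ball_lt_top.ne
        rw [integral_add (integrable_const _) (integrable_log_one_add_discDeviation.div_const 2),
          integral_div, integral_log_one_add_discDeviation, integral_const, probReal_univ, one_smul]
    _ = Real.pi / 2 - 1 := by ring
end
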